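/- For the elephant random walk with memory parameter p ∈ [0, 1) on a Cayley graph that is the d-regular tree T_d (d ≥ 3): if p ≤ p_d there exists C > 0 such that E|Δ_n/n − (d − 2)/d|^2 ≤ C · r_n^{−2} · log n for all n ≥ 2, and if p > p_d there exists C > 0 such that E|Δ_n/n − (d − 2)/d|^2 ≤ C · r_n^{−2} for all n ≥ 1, where r_n = n^{1/2} if p < p_d, r_n = (n / log n)^{1/2} if p = p_d, and r_n = n^{d(1−p)/(d−1)} if p > p_d, with p_d = (d + 1)/(2d). -/

import Mathlib

open MeasureTheory ProbabilityTheory Filter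

noncomputable section

/-- The Cayley graph of a group with respect to a finite set of generators. -/
def cayleyGraph {G : Type*} [Group G] (S : Finset G) : SimpleGraph G where
  Adj x y := x ≠ y ∧ (y * x⁻¹ ∈ S ∨ x * y⁻¹ ∈ S)
  symm := by
    refine ⟨?_⟩
    rintro x y ⟨h1, h2⟩
    refine ⟨h1.symm, ?_⟩
    rcases h2 with h | h
    · exact Or.inr h
    · exact Or.inl h
  loopless := ⟨fun x h => h.1 rfl⟩

/-- The elephant random walk (ERW) with memory parameter `p` on the Cayley graph of a
group `G` with respect to a symmetric generating set `S` of cardinality `d`, not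
containing the identity, whose Cayley graph is a tree (hence the `d`-regular tree
`T_d`).  The steps are `g 1, g 2, …` (the value of `g 0` is irrelevant).  The law of
the process is characterised by: `g 1` is uniform on `S`, and, conditionally on the
first `n` steps being `s 1, …, s n`, the next step `g (n+1)` equals `a ∈ S` with
probability `p * N/n + ((1-p)/(d-1)) * (n-N)/n`, where `N = #{1 ≤ k ≤ n : s k = a}`;
this is precisely the probability that the walker, recalling a uniform past epoch
`D ∈ {1, …, n}`, repeats `g D` with probability `p` and takes any given other step
with probability `(1-p)/(d-1)`. -/
structure ERW (G : Type*) [Group G] [DecidableEq G] (d : ℕ) (p : ℝ)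
    (Ω : Type*) [MeasurableSpace Ω] (P : Measure Ω) where
  S : Finset G
  card_S : S.card = d
  symm_S : ∀ s ∈ S, s⁻¹ ∈ S
  one_not_mem : (1 : G) ∉ S
  tree : (cayleyGraph S).IsTree
  g : ℕ → Ω → G
  meas_g : ∀ n a, MeasurableSet {ω | g n ω = a}
  mem_S : ∀ n, 1 ≤ n → ∀ ω, g n ω ∈ S
  init : ∀ a ∈ S, (P {ω | g 1 ω = a}).toReal = 1 / d
  update : ∀ n, 1 ≤ n → ∀ s : ℕ → G, ∀ a ∈ S,
    (P ({ω | ∀ k ∈ Finset.Icc 1 n, g k ω = s k} ∩ {ω | g (n + 1) ω = a})).toReal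
      = (p * ((((Finset.Icc 1 n).filter fun k => s k = a).card : ℝ) / n)
          + (1 - p) / ((d : ℝ) - 1)
            * (((n : ℝ) - (((Finset.Icc 1 n).filter fun k => s k = a).card : ℝ)) / n))
        * (P {ω | ∀ k ∈ Finset.Icc 1 n, g k ω = s k}).toReal

namespace ERW

variable {G : Type*} [Group G] [DecidableEq G] {d : ℕ} {p : ℝ}
  {Ω : Type*} [MeasurableSpace Ω] {P : Measure Ω}

/-- The position `w n = g n ⋯ g 1` of the walk at time `n`. -/
def pos (E : ERW G d p Ω P) : ℕ → Ω → G
  | 0 => fun _ => 1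
  | n + 1 => fun ω => E.g (n + 1) ω * E.pos n ω

/-- `Δ n`: the (word-metric) distance of the walker from the root at time `n`. -/
def dist (E : ERW G d p Ω P) (n : ℕ) (ω : Ω) : ℕ :=
  (cayleyGraph E.S).dist 1 (E.pos n ω)

/-- `N n a`: the number of `a`-steps taken by time `n`. -/
def count (E : ERW G d p Ω P) (a : G) (n : ℕ) (ω : Ω) : ℕ :=
  ((Finset.Icc 1 n).filter fun k => E.g k ω = a).card

/-- `γ n`: the unique step decreasing the distance to the root by 1
(a junk value if the walker is at the root). -/
def gammaStep (E : ERW G d p Ω P) (n : ℕ) (ω : Ω) : G :=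
  @Classical.epsilon G ⟨1⟩ fun s =>
    s ∈ E.S ∧ (cayleyGraph E.S).dist 1 (s * E.pos n ω) + 1 = E.dist n ω

/-- `ℓ n = N n (γ n)` if the walker is away from the root, and `0` otherwise. -/
def ell (E : ERW G d p Ω P) (n : ℕ) (ω : Ω) : ℕ :=
  if E.pos n ω = 1 then 0 else E.count (E.gammaStep n ω) n ω

/-- `Ξ n = (1/n) ∑_{k=0}^{n-1} (ℓ k / k - 1(Δ k > 0)/d)` (with the convention
`ℓ 0 / 0 = 0`, automatic since division by zero yields zero). -/
def Xi (E : ERW G d p Ω P) (n : ℕ) (ω : Ω) : ℝ :=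
  (1 / n) * ∑ k ∈ Finset.range n,
    ((E.ell k ω : ℝ) / k - (if 0 < E.dist k ω then 1 else 0) / d)

/-- The natural filtration `F n` generated by the steps up to time `n`. -/
def filt (E : ERW G d p Ω P) (n : ℕ) : MeasurableSpace Ω :=
  ⨆ k ∈ Finset.Icc 1 n, MeasurableSpace.comap (E.g k) ⊤

/-- `G n = E[Δ (n+1) - Δ n | F n]`. -/
def drift (E : ERW G d p Ω P) (n : ℕ) : Ω → ℝ :=
  P[fun ω => ((E.dist (n + 1) ω : ℝ) - (E.dist n ω : ℝ)) | E.filt n]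

/-- The martingale differences `Y k = Δ k - Δ (k-1) - G (k-1)`. -/
def mdiff (E : ERW G d p Ω P) (k : ℕ) (ω : Ω) : ℝ :=
  (E.dist k ω : ℝ) - (E.dist (k - 1) ω : ℝ) - E.drift (k - 1) ω

/-- The martingale `M n = ∑_{k=1}^n Y k`. -/
def mart (E : ERW G d p Ω P) (n : ℕ) (ω : Ω) : ℝ :=
  ∑ k ∈ Finset.Icc 1 n, E.mdiff k ω

end ERW

/-- The rate `r n`: `√n` in the subcritical regime `p < p_d = (d+1)/(2d)`,
`√(n / log n)` in the critical regime `p = p_d`, and `n ^ (d(1-p)/(d-1))` in the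
supercritical regime `p > p_d`. -/
def rate (p : ℝ) (d : ℕ) (n : ℕ) : ℝ :=
  if p < ((d : ℝ) + 1) / (2 * d) then Real.sqrt n
  else if p = ((d : ℝ) + 1) / (2 * d) then Real.sqrt ((n : ℝ) / Real.log n)
  else (n : ℝ) ^ ((d : ℝ) * (1 - p) / ((d : ℝ) - 1))

/-!
Away from the root exactly one generator `γ n` moves the walker back towards the root, and the next
step is `γ n` with conditional probability `1 / d + α * (ℓ n / n - 1 / d)`, where
`α = (p * d - 1) / (d - 1)`. Hence `Δ n - n * (d - 2) / d` is a term counting the visits to the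
root, minus twice the fluctuation: a martingale with bounded increments plus the bias `α * n * Ξ n`.
The bias is controlled by the centred step counts `X n`, whose second moments satisfy
`E (X (n + 1) ^ 2) ≤ (1 + 2 * α / n) * E (X n ^ 2) + 1`. They are therefore at most of
order `n`, `n * log n` or `n ^ (2 * α)` according to the sign of `α - 1 / 2`, which is the sign of
`p - p_d`. Visits to the root are rare for the same reason: for a walker at the root at time `n` the
fluctuation must cancel the whole linear drift, which by Chebyshev has probability
`O(E (fluctuation ^ 2) / n ^ 2)`.
-/

section Tree

variable {V : Type*} {H : SimpleGraph V} {r x y z : V}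

lemma exists_adj_dist_add_one_eq (hH : H.Connected) (hx : x ≠ r) :
    ∃ y, H.Adj x y ∧ H.dist r y + 1 = H.dist r x := by
  obtain ⟨geodesic, hlength⟩ := hH.exists_walk_length_eq_dist x r
  cases geodesic with
  | nil => exact absurd rfl hx
  | cons hadj tail =>
    refine ⟨_, hadj, ?_⟩
    have htail := SimpleGraph.dist_le tail
    have hdiff := hadj.diff_dist_adj (u := r)
    rw [SimpleGraph.Walk.length_cons, SimpleGraph.dist_comm] at hlength
    rw [SimpleGraph.dist_comm] at htail
    omega

lemma isPath_cons_of_dist_add_one_eq (hadj : H.Adj x y) (hdist : H.dist r y + 1 = H.dist r x)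
    {w : H.Walk y r} (hw : w.length = H.dist y r) : (SimpleGraph.Walk.cons hadj w).IsPath := by
  apply SimpleGraph.Walk.isPath_of_length_eq_dist
  rw [SimpleGraph.Walk.length_cons, hw, SimpleGraph.dist_comm, hdist, SimpleGraph.dist_comm]

lemma eq_of_adj_of_dist_add_one_eq (hH : H.IsTree) (hy : H.Adj x y) (hz : H.Adj x z)
    (hdy : H.dist r y + 1 = H.dist r x) (hdz : H.dist r z + 1 = H.dist r x) : y = z := by
  obtain ⟨w, hw⟩ := hH.connected.exists_walk_length_eq_dist y r
  obtain ⟨w', hw'⟩ := hH.connected.exists_walk_length_eq_dist z r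
  have hpaths := (hH.isAcyclic.subsingleton_path x r).elim
    ⟨_, isPath_cons_of_dist_add_one_eq hy hdy hw⟩ ⟨_, isPath_cons_of_dist_add_one_eq hz hdz hw'⟩
  simpa using congrArg (fun path : H.Path x r => path.1.snd) hpaths

end Tree

section CayleyGraph

variable {G : Type*} [Group G] {S : Finset G} {s x y : G}

lemma cayleyGraph_adj_mul_left (hone : (1 : G) ∉ S) (hs : s ∈ S) (x : G) :
    (cayleyGraph S).Adj x (s * x) := by
  refine ⟨fun h => hone ?_, Or.inl (by simpa using hs)⟩
  have hs1 : s = 1 := by simpa using h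
  rwa [← hs1]

lemma exists_mem_eq_mul_of_cayleyGraph_adj (hsymm : ∀ s ∈ S, s⁻¹ ∈ S)
    (h : (cayleyGraph S).Adj x y) : ∃ s ∈ S, y = s * x := by
  refine ⟨y * x⁻¹, h.2.elim id fun hxy => ?_, by simp⟩
  simpa using hsymm _ hxy

end CayleyGraph

section FiniteFibers

variable {Ω ι : Type*} [MeasurableSpace Ω] {P : Measure Ω} [Finite ι] {H : Ω → ι}

lemma integrable_of_factorsThrough [IsFiniteMeasure P] (hH : ∀ i, MeasurableSet (H ⁻¹' {i}))
    {f : Ω → ℝ} (hf : f.FactorsThrough H) : Integrable f P := by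
  let : MeasurableSpace ι := ⊤
  have hHm : Measurable H := measurable_to_countable' hH
  obtain ⟨φ, rfl⟩ := (Function.factorsThrough_iff f).1 hf
  exact Integrable.of_finite.comp_measurable hHm

lemma integral_eq_of_setIntegral_fiber_eq (hH : ∀ i, MeasurableSet (H ⁻¹' {i})) {f g : Ω → ℝ}
    (hf : Integrable f P) (hg : Integrable g P)
    (hfg : ∀ ω₀, ∫ ω in H ⁻¹' {H ω₀}, f ω ∂P = ∫ ω in H ⁻¹' {H ω₀}, g ω ∂P) :
    ∫ ω, f ω ∂P = ∫ ω, g ω ∂P := by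
  have hdisj : Pairwise (Function.onFun Disjoint fun i => H ⁻¹' {i}) := fun i j hij =>
    (Set.disjoint_singleton.2 hij).preimage H
  have hcover : ⋃ i, H ⁻¹' {i} = Set.univ := by ext; simp
  rw [← setIntegral_univ, ← setIntegral_univ (f := g), ← hcover,
    integral_iUnion hH hdisj hf.integrableOn, integral_iUnion hH hdisj hg.integrableOn]
  congr 1 with i
  rcases (H ⁻¹' {i}).eq_empty_or_nonempty with hempty | ⟨ω₀, rfl⟩
  · rw [hempty, setIntegral_empty, setIntegral_empty]
  · exact hfg ω₀

end FiniteFibers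

lemma integral_le_integral_add_two_mul_integral_add_one {Ω : Type*} [MeasurableSpace Ω]
    {P : Measure Ω} [IsProbabilityMeasure P] {f g h : Ω → ℝ} (hf : ∀ ω, 0 ≤ f ω)
    (hg : Integrable g P) (hh : Integrable h P) (hle : ∀ ω, f ω ≤ g ω + 2 * h ω + 1) :
    ∫ ω, f ω ∂P ≤ ∫ ω, g ω ∂P + 2 * ∫ ω, h ω ∂P + 1 := by
  calc ∫ ω, f ω ∂P ≤ ∫ ω, (g ω + 2 * h ω + 1) ∂P :=
        integral_mono_of_nonneg (.of_forall hf)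
          ((hg.add (hh.const_mul 2)).add (integrable_const 1)) (.of_forall hle)
    _ = ∫ ω, (g ω + 2 * h ω) ∂P + 1 := by
        simpa using integral_add (hg.add (hh.const_mul 2)) (integrable_const (1 : ℝ))
    _ = ∫ ω, g ω ∂P + 2 * ∫ ω, h ω ∂P + 1 := by
        rw [integral_add hg (hh.const_mul 2), integral_const_mul]

section PowerSums

lemma rpow_le_tangent {q x y : ℝ} (hq0 : 0 ≤ q) (hq1 : q ≤ 1) (hx : 0 ≤ x) (hy : 0 < y) :
    x ^ q ≤ y ^ q + q * y ^ (q - 1) * (x - y) := by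
  have hxy : 0 ≤ x / y := by positivity
  have hbernoulli := rpow_one_add_le_one_add_mul_self (s := x / y - 1) (by linarith) hq0 hq1
  calc x ^ q = y ^ q * (1 + (x / y - 1)) ^ q := by
        rw [add_sub_cancel, ← Real.mul_rpow hy.le hxy, mul_div_cancel₀ _ hy.ne']
    _ ≤ y ^ q * (1 + q * (x / y - 1)) := by gcongr
    _ = y ^ q + q * y ^ (q - 1) * (x - y) := by
        rw [Real.rpow_sub_one hy.ne']
        field_simp

lemma sum_Icc_rpow_sub_one_le {q : ℝ} (hq0 : 0 < q) (hq1 : q ≤ 1) (n : ℕ) :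
    ∑ k ∈ Finset.Icc 1 n, (k : ℝ) ^ (q - 1) ≤ (n : ℝ) ^ q / q := by
  induction n with
  | zero => simp [Real.zero_rpow hq0.ne']
  | succ n ih =>
    have htangent := rpow_le_tangent hq0.le hq1 n.cast_nonneg (n.cast_add_one_pos (α := ℝ))
    rw [Finset.sum_Icc_succ_top (by omega), Nat.cast_add_one]
    calc ∑ k ∈ Finset.Icc 1 n, (k : ℝ) ^ (q - 1) + ((n : ℝ) + 1) ^ (q - 1)
        ≤ (n : ℝ) ^ q / q + ((n : ℝ) + 1) ^ (q - 1) := by gcongr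
      _ ≤ ((n : ℝ) + 1) ^ q / q := by
        rw [div_add' _ _ _ hq0.ne']
        gcongr
        linarith

lemma sum_Icc_rpow_div_le {q : ℝ} (hq0 : 0 < q) (hq1 : q ≤ 1) (n : ℕ) :
    ∑ k ∈ Finset.Icc 1 n, (k : ℝ) ^ q / k ≤ (n : ℝ) ^ q / q := by
  refine (Finset.sum_congr rfl fun k hk => ?_).trans_le (sum_Icc_rpow_sub_one_le hq0 hq1 n)
  exact (Real.rpow_sub_one (by have := (Finset.mem_Icc.1 hk).1; positivity) q).symm

lemma sum_Ico_one_div_sqrt_le (n : ℕ) : ∑ k ∈ Finset.Ico 1 n, 1 / √(k : ℝ) ≤ 2 * √(n : ℝ) := by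
  calc ∑ k ∈ Finset.Ico 1 n, 1 / √(k : ℝ)
      ≤ ∑ k ∈ Finset.Icc 1 n, 1 / √(k : ℝ) :=
        Finset.sum_le_sum_of_subset_of_nonneg Finset.Ico_subset_Icc_self
          fun _ _ _ => by positivity
    _ = ∑ k ∈ Finset.Icc 1 n, (k : ℝ) ^ ((1 / 2 : ℝ) - 1) := by
        refine Finset.sum_congr rfl fun k _ => ?_
        rw [Real.sqrt_eq_rpow, one_div, ← Real.rpow_neg k.cast_nonneg]
        norm_num
    _ ≤ (n : ℝ) ^ (1 / 2 : ℝ) / (1 / 2) := sum_Icc_rpow_sub_one_le (by norm_num) (by norm_num) n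
    _ = 2 * √(n : ℝ) := by
        rw [Real.sqrt_eq_rpow]
        ring

lemma sum_Icc_one_div_le_one_add_log (n : ℕ) :
    ∑ k ∈ Finset.Icc 1 n, 1 / (k : ℝ) ≤ 1 + Real.log n := by
  simpa [harmonic_eq_sum_Icc] using harmonic_le_one_add_log n

lemma monotoneOn_one_add_log : MonotoneOn (fun n : ℕ => 1 + Real.log n) (Set.Ici 1) := by
  intro m hm n _ hmn
  have hm0 : (0 : ℝ) < m := by exact_mod_cast hm
  simp only
  gcongr

lemma sum_Icc_one_add_log_div_le (n : ℕ) :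
    ∑ k ∈ Finset.Icc 1 n, (1 + Real.log k) / k ≤ (1 + Real.log n) ^ 2 := by
  calc ∑ k ∈ Finset.Icc 1 n, (1 + Real.log k) / k
      ≤ ∑ k ∈ Finset.Icc 1 n, (1 + Real.log n) * (1 / k) := by
        refine Finset.sum_le_sum fun k hk => ?_
        obtain ⟨hk1, hkn⟩ := Finset.mem_Icc.1 hk
        rw [mul_one_div]
        gcongr ?_ / _
        exact monotoneOn_one_add_log hk1 (hk1.trans hkn) hkn
    _ ≤ (1 + Real.log n) * (1 + Real.log n) := by
        rw [← Finset.mul_sum]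
        gcongr
        exact sum_Icc_one_div_le_one_add_log n
    _ = (1 + Real.log n) ^ 2 := (sq _).symm

lemma sq_sum_Ico_le_sqrt_mul (b : ℕ → ℝ) (n : ℕ) :
    (∑ k ∈ Finset.Ico 1 n, b k) ^ 2 ≤ 2 * √(n : ℝ) * ∑ k ∈ Finset.Ico 1 n, √(k : ℝ) * b k ^ 2 := by
  calc (∑ k ∈ Finset.Ico 1 n, b k) ^ 2
      ≤ (∑ k ∈ Finset.Ico 1 n, 1 / √(k : ℝ)) * ∑ k ∈ Finset.Ico 1 n, √(k : ℝ) * b k ^ 2 := by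
        refine Finset.sum_sq_le_sum_mul_sum_of_sq_le_mul _ (fun _ _ => by positivity)
          (fun _ _ => by positivity) fun k hk => ?_
        have hk0 : 0 < √(k : ℝ) := Real.sqrt_pos.2 (by exact_mod_cast (Finset.mem_Ico.1 hk).1)
        exact le_of_eq (by field_simp)
    _ ≤ 2 * √(n : ℝ) * ∑ k ∈ Finset.Ico 1 n, √(k : ℝ) * b k ^ 2 := by
        gcongr
        exact sum_Ico_one_div_sqrt_le n

lemma integral_sq_sum_Ico_le {Ω : Type*} [MeasurableSpace Ω] {P : Measure Ω} {b : ℕ → Ω → ℝ}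
    {c : ℝ} {n : ℕ} (hc : 0 ≤ c)
    (hint : ∀ k ∈ Finset.Ico 1 n, Integrable (fun ω => b k ω ^ 2) P)
    (hb : ∀ k ∈ Finset.Ico 1 n, ∫ ω, b k ω ^ 2 ∂P ≤ c / k) :
    ∫ ω, (∑ k ∈ Finset.Ico 1 n, b k ω) ^ 2 ∂P ≤ 4 * c * n := by
  have hint' : ∀ k ∈ Finset.Ico 1 n, Integrable (fun ω => √(k : ℝ) * b k ω ^ 2) P :=
    fun k hk => (hint k hk).const_mul _
  have hterm : ∀ k ∈ Finset.Ico 1 n, √(k : ℝ) * ∫ ω, b k ω ^ 2 ∂P ≤ c * (1 / √(k : ℝ)) := by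
    intro k hk
    calc √(k : ℝ) * ∫ ω, b k ω ^ 2 ∂P ≤ √(k : ℝ) * (c / k) := by
          gcongr
          exact hb k hk
      _ = c * (√(k : ℝ) / k) := by ring
      _ = c * (1 / √(k : ℝ)) := by rw [Real.sqrt_div_self']
  calc ∫ ω, (∑ k ∈ Finset.Ico 1 n, b k ω) ^ 2 ∂P
      ≤ ∫ ω, 2 * √(n : ℝ) * ∑ k ∈ Finset.Ico 1 n, √(k : ℝ) * b k ω ^ 2 ∂P :=
        integral_mono_of_nonneg (.of_forall fun _ => sq_nonneg _)
          ((integrable_finsetSum _ hint').const_mul _)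
          (.of_forall fun ω => sq_sum_Ico_le_sqrt_mul (b · ω) n)
    _ = 2 * √(n : ℝ) * ∑ k ∈ Finset.Ico 1 n, √(k : ℝ) * ∫ ω, b k ω ^ 2 ∂P := by
        simp only [integral_const_mul, integral_finsetSum _ hint']
    _ ≤ 2 * √(n : ℝ) * (c * ∑ k ∈ Finset.Ico 1 n, 1 / √(k : ℝ)) := by
        exact mul_le_mul_of_nonneg_left
          ((Finset.sum_le_sum hterm).trans_eq (Finset.mul_sum ..).symm) (by positivity)
    _ ≤ 2 * √(n : ℝ) * (c * (2 * √(n : ℝ))) := by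
        gcongr
        exact sum_Ico_one_div_sqrt_le n
    _ = 4 * c * √(n : ℝ) ^ 2 := by ring
    _ = 4 * c * n := by rw [Real.sq_sqrt n.cast_nonneg]

end PowerSums

section Recursion

variable {β : ℝ} {x : ℕ → ℝ}

lemma le_mul_of_recursion_of_lt_one (hβ0 : -1 ≤ β) (hβ1 : β < 1) (hone : x 1 ≤ 1)
    (hrec : ∀ n, 1 ≤ n → x (n + 1) ≤ (1 + β / n) * x n + 1) {n : ℕ} (hn : 1 ≤ n) :
    x n ≤ 2 / (1 - β) * n := by
  have hgap : 0 < 1 - β := by linarith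
  induction n, hn using Nat.le_induction with
  | base =>
    have : 1 ≤ 2 / (1 - β) := by rw [one_le_div hgap]; linarith
    simpa using hone.trans this
  | succ n hn ih =>
    have hn1 : (1 : ℝ) ≤ n := by exact_mod_cast hn
    have hcoef : 0 ≤ 1 + β / n := by
      rw [one_add_div (by positivity)]
      exact div_nonneg (by linarith) n.cast_nonneg
    calc x (n + 1) ≤ (1 + β / n) * x n + 1 := hrec n hn
      _ ≤ (1 + β / n) * (2 / (1 - β) * n) + 1 := by gcongr
      _ = 2 / (1 - β) * (n + 1 : ℕ) - 1 := by
        push_cast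
        field_simp
        ring
      _ ≤ 2 / (1 - β) * (n + 1 : ℕ) := by linarith

lemma le_harmonic_mul_of_recursion (hone : x 1 ≤ 1)
    (hrec : ∀ n : ℕ, 1 ≤ n → x (n + 1) ≤ (1 + 1 / n) * x n + 1) {n : ℕ} (hn : 1 ≤ n) :
    x n ≤ harmonic n * n := by
  induction n, hn using Nat.le_induction with
  | base => simpa using hone
  | succ n hn ih =>
    calc x (n + 1) ≤ (1 + 1 / n) * x n + 1 := hrec n hn
      _ ≤ (1 + 1 / n) * (harmonic n * n) + 1 := by gcongr
      _ = harmonic (n + 1) * (n + 1 : ℕ) := by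
        rw [harmonic_succ]
        push_cast
        field_simp

-- Adding the particular solution `n / (β - 1)` makes the recursion homogeneous.
lemma add_le_rpow_of_recursion_of_one_lt (hβ : 1 < β) (hone : x 1 ≤ 1)
    (hrec : ∀ n, 1 ≤ n → x (n + 1) ≤ (1 + β / n) * x n + 1) {n : ℕ} (hn : 1 ≤ n) :
    x n + n / (β - 1) ≤ (1 + 1 / (β - 1)) * (n : ℝ) ^ β := by
  have hgap : 0 < β - 1 := by linarith
  induction n, hn using Nat.le_induction with
  | base => simpa using hone
  | succ n hn ih =>
    have hbernoulli := one_add_mul_self_le_rpow_one_add (s := 1 / (n : ℝ))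
      (by linarith [show 0 ≤ 1 / (n : ℝ) by positivity]) hβ.le
    calc x (n + 1) + (n + 1 : ℕ) / (β - 1)
        ≤ (1 + β / n) * x n + 1 + (n + 1 : ℕ) / (β - 1) := by
          gcongr
          exact hrec n hn
      _ = (1 + β * (1 / n)) * (x n + n / (β - 1)) := by
          push_cast
          field_simp
          ring
      _ ≤ (1 + β * (1 / n)) * ((1 + 1 / (β - 1)) * (n : ℝ) ^ β) := by gcongr
      _ ≤ (1 + 1 / (n : ℝ)) ^ β * ((1 + 1 / (β - 1)) * (n : ℝ) ^ β) := by gcongr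
      _ = (1 + 1 / (β - 1)) * ((n : ℝ) * (1 + 1 / n)) ^ β := by
          rw [Real.mul_rpow (by positivity) (by positivity)]
          ring
      _ = (1 + 1 / (β - 1)) * ((n + 1 : ℕ) : ℝ) ^ β := by
          congr 2
          push_cast
          field_simp

end Recursion

namespace ERW

variable {G : Type*} [Group G] [DecidableEq G] {d : ℕ} {p : ℝ}
  {Ω : Type*} [MeasurableSpace Ω] {P : Measure Ω} (E : ERW G d p Ω P)

section History

variable {β γ δ : Type*} {m n : ℕ}

/-- The history `(g 1, …, g n)` of the walk, as an element of a finite type. -/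
def hist (n : ℕ) (ω : Ω) : Finset.Icc 1 n → E.S :=
  fun k => ⟨E.g k ω, E.mem_S k (Finset.mem_Icc.1 k.2).1 ω⟩

lemma hist_eq_iff {ω ω' : Ω} :
    E.hist n ω = E.hist n ω' ↔ ∀ k ∈ Finset.Icc 1 n, E.g k ω = E.g k ω' := by
  simp only [hist, funext_iff, Subtype.ext_iff, Subtype.forall]

lemma measurableSet_hist_preimage_singleton (s : Finset.Icc 1 n → E.S) :
    MeasurableSet (E.hist n ⁻¹' {s}) := by
  have hcylinder : E.hist n ⁻¹' {s} = ⋂ k : Finset.Icc 1 n, {ω | E.g k ω = s k} := by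
    ext ω
    simp [hist, funext_iff, Subtype.ext_iff]
  rw [hcylinder]
  exact MeasurableSet.iInter fun k => E.meas_g _ _

/-- `F` is a function of the first `n` steps. As there are only finitely many histories, this
replaces measurability with respect to the natural filtration. -/
def DeterminedAt (n : ℕ) (F : Ω → β) : Prop :=
  F.FactorsThrough (E.hist n)

variable {E}

lemma DeterminedAt.mono {F : Ω → β} (hF : E.DeterminedAt m F) (hmn : m ≤ n) :
    E.DeterminedAt n F := fun _ _ h =>
  hF (E.hist_eq_iff.2 fun k hk => E.hist_eq_iff.1 h k (Finset.Icc_subset_Icc_right hmn hk))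

lemma DeterminedAt.comp {F : Ω → β} (hF : E.DeterminedAt n F) (φ : β → γ) :
    E.DeterminedAt n fun ω => φ (F ω) := fun _ _ h => congrArg φ (hF h)

lemma DeterminedAt.comp₂ {F : Ω → β} {F' : Ω → γ} (hF : E.DeterminedAt n F)
    (hF' : E.DeterminedAt n F') (φ : β → γ → δ) : E.DeterminedAt n fun ω => φ (F ω) (F' ω) :=
  fun _ _ h => congrArg₂ φ (hF h) (hF' h)

lemma DeterminedAt.sum {ι : Type*} {s : Finset ι} {F : ι → Ω → ℝ}
    (hF : ∀ i ∈ s, E.DeterminedAt n (F i)) : E.DeterminedAt n fun ω => ∑ i ∈ s, F i ω :=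
  fun _ _ h => Finset.sum_congr rfl fun i hi => hF i hi h

lemma DeterminedAt.integrable [IsFiniteMeasure P] {F : Ω → ℝ} (hF : E.DeterminedAt n F) :
    Integrable F P :=
  integrable_of_factorsThrough E.measurableSet_hist_preimage_singleton hF

variable (E)

lemma determinedAt_g (hn : 1 ≤ n) : E.DeterminedAt n (E.g n) := fun _ _ h =>
  E.hist_eq_iff.1 h n (Finset.right_mem_Icc.2 hn)

lemma determinedAt_pos (n : ℕ) : E.DeterminedAt n (E.pos n) := by
  induction n with
  | zero => exact fun _ _ _ => rfl
  | succ n ih => exact (E.determinedAt_g n.succ_pos).comp₂ (ih.mono n.le_succ) (· * ·)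

lemma determinedAt_dist (n : ℕ) : E.DeterminedAt n (E.dist n) :=
  (E.determinedAt_pos n).comp ((cayleyGraph E.S).dist 1)

lemma determinedAt_count (n : ℕ) : E.DeterminedAt n fun ω a => E.count a n ω := by
  intro ω ω' h
  funext a
  exact congrArg Finset.card
    (Finset.filter_congr fun k hk => by rw [E.hist_eq_iff.1 h k hk])

lemma determinedAt_gammaStep (n : ℕ) : E.DeterminedAt n (E.gammaStep n) :=
  (E.determinedAt_pos n).comp fun x => @Classical.epsilon G ⟨1⟩ fun s =>
    s ∈ E.S ∧ (cayleyGraph E.S).dist 1 (s * x) + 1 = (cayleyGraph E.S).dist 1 x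

end History

section TransitionProbability

variable {n : ℕ}

/-- The conditional probability that step `n + 1` is `a`, given the first `n` steps (`1 ≤ n`). -/
def stepProb (a : G) (n : ℕ) (ω : Ω) : ℝ :=
  p * ((E.count a n ω : ℝ) / n) + (1 - p) / ((d : ℝ) - 1) * (((n : ℝ) - E.count a n ω) / n)

lemma determinedAt_stepProb {A : Ω → G} (hA : E.DeterminedAt n A) :
    E.DeterminedAt n fun ω => E.stepProb (A ω) n ω :=
  hA.comp₂ (E.determinedAt_count n) fun a N =>
    p * ((N a : ℝ) / n) + (1 - p) / ((d : ℝ) - 1) * (((n : ℝ) - N a) / n)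

lemma determinedAt_succ_indicator {A : Ω → G} (hA : E.DeterminedAt n A) :
    E.DeterminedAt (n + 1) fun ω => if E.g (n + 1) ω = A ω then (1 : ℝ) else 0 :=
  (E.determinedAt_g n.succ_pos).comp₂ (hA.mono n.le_succ) fun a b => if a = b then 1 else 0

lemma setIntegral_hist_indicator_eq (hn : 1 ≤ n) {a : G} (ha : a ∈ E.S)
    (ω₀ : Ω) :
    ∫ ω in E.hist n ⁻¹' {E.hist n ω₀}, (if E.g (n + 1) ω = a then (1 : ℝ) else 0) ∂P
      = E.stepProb a n ω₀ * P.real (E.hist n ⁻¹' {E.hist n ω₀}) := by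
  have hcylinder : E.hist n ⁻¹' {E.hist n ω₀} = {ω | ∀ k ∈ Finset.Icc 1 n, E.g k ω = E.g k ω₀} :=
    Set.ext fun _ => E.hist_eq_iff
  calc ∫ ω in E.hist n ⁻¹' {E.hist n ω₀}, (if E.g (n + 1) ω = a then (1 : ℝ) else 0) ∂P
      = ∫ ω in E.hist n ⁻¹' {E.hist n ω₀}, {ω | E.g (n + 1) ω = a}.indicator 1 ω ∂P := by
        simp only [Set.indicator_apply, Set.mem_ofPred_eq, Pi.one_apply]
    _ = P.real (E.hist n ⁻¹' {E.hist n ω₀} ∩ {ω | E.g (n + 1) ω = a}) := by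
        rw [integral_indicator_one (E.meas_g _ _), measureReal_restrict_apply (E.meas_g _ _),
          Set.inter_comm]
    _ = E.stepProb a n ω₀ * P.real (E.hist n ⁻¹' {E.hist n ω₀}) := by
        rw [hcylinder]
        exact E.update n hn (E.g · ω₀) a ha

lemma integral_mul_indicator_eq [IsFiniteMeasure P] (hn : 1 ≤ n) {F : Ω → ℝ} {A : Ω → G}
    (hF : E.DeterminedAt n F) (hA : E.DeterminedAt n A) (hAS : ∀ ω, F ω ≠ 0 → A ω ∈ E.S) :
    ∫ ω, F ω * (if E.g (n + 1) ω = A ω then 1 else 0) ∂P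
      = ∫ ω, F ω * E.stepProb (A ω) n ω ∂P := by
  have hprob := E.determinedAt_stepProb hA
  refine integral_eq_of_setIntegral_fiber_eq (H := E.hist n)
    E.measurableSet_hist_preimage_singleton
    ((hF.mono n.le_succ).comp₂ (E.determinedAt_succ_indicator hA) (· * ·)).integrable
    (hF.comp₂ hprob (· * ·)).integrable fun ω₀ => ?_
  have hfiber := E.measurableSet_hist_preimage_singleton (E.hist n ω₀)
  calc ∫ ω in E.hist n ⁻¹' {E.hist n ω₀}, F ω * (if E.g (n + 1) ω = A ω then 1 else 0) ∂P
      = ∫ ω in E.hist n ⁻¹' {E.hist n ω₀}, F ω₀ * (if E.g (n + 1) ω = A ω₀ then 1 else 0) ∂P :=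
        setIntegral_congr_fun hfiber fun ω hω => by simp only [hF hω, hA hω]
    _ = F ω₀ * E.stepProb (A ω₀) n ω₀ * P.real (E.hist n ⁻¹' {E.hist n ω₀}) := by
        rw [integral_const_mul]
        rcases eq_or_ne (F ω₀) 0 with hzero | hne
        · simp only [hzero, zero_mul]
        · rw [E.setIntegral_hist_indicator_eq hn (hAS ω₀ hne), mul_assoc]
    _ = ∫ _ in E.hist n ⁻¹' {E.hist n ω₀}, F ω₀ * E.stepProb (A ω₀) n ω₀ ∂P := by
        rw [setIntegral_const, smul_eq_mul, mul_comm]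
    _ = ∫ ω in E.hist n ⁻¹' {E.hist n ω₀}, F ω * E.stepProb (A ω) n ω ∂P :=
        setIntegral_congr_fun hfiber fun ω hω => by simp only [hF hω, hprob hω]

end TransitionProbability

section Counts

variable {n : ℕ} {a : G}

/-- The exponent `α = (p d - 1) / (d - 1)`: at time `n`, a step whose count exceeds the typical
value `n / d` by `x` has conditional probability `1 / d + α x / n`. -/
def memoryExponent (p : ℝ) (d : ℕ) : ℝ :=
  (p * d - 1) / (d - 1)

lemma count_succ (a : G) (n : ℕ) (ω : Ω) :
    E.count a (n + 1) ω = E.count a n ω + if E.g (n + 1) ω = a then 1 else 0 := by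
  simp only [count, Finset.card_filter, Finset.sum_Icc_succ_top (Nat.le_add_left 1 n)]

lemma count_le (a : G) (n : ℕ) (ω : Ω) : E.count a n ω ≤ n := by
  simpa [count] using Finset.card_filter_le (Finset.Icc 1 n) fun k => E.g k ω = a

/-- The deviation of the number of `a`-steps from its typical value `n / d`. -/
def centredCount (a : G) (n : ℕ) (ω : Ω) : ℝ :=
  E.count a n ω - n / d

lemma centredCount_succ (a : G) (n : ℕ) (ω : Ω) :
    E.centredCount a (n + 1) ω
      = E.centredCount a n ω + ((if E.g (n + 1) ω = a then 1 else 0) - 1 / d) := by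
  simp only [centredCount, count_succ]
  push_cast
  ring

lemma determinedAt_centredCount (n : ℕ) : E.DeterminedAt n fun ω a => E.centredCount a n ω :=
  (E.determinedAt_count n).comp fun N a => (N a : ℝ) - n / d

lemma stepProb_eq (hd : 1 < d) (hn : n ≠ 0) (a : G) (ω : Ω) :
    E.stepProb a n ω = 1 / d + memoryExponent p d * (E.centredCount a n ω / n) := by
  have hd0 : (d : ℝ) ≠ 0 := by positivity
  have hd1 : (d : ℝ) - 1 ≠ 0 := sub_ne_zero.2 (by exact_mod_cast hd.ne')
  simp only [stepProb, memoryExponent, centredCount]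
  field_simp
  ring

lemma sq_centredCount_succ_le (a : G) (n : ℕ) (ω : Ω) :
    E.centredCount a (n + 1) ω ^ 2
      ≤ E.centredCount a n ω ^ 2
        + 2 * (E.centredCount a n ω * ((if E.g (n + 1) ω = a then 1 else 0) - 1 / d)) + 1 := by
  have hd0 : 0 ≤ 1 / (d : ℝ) := by positivity
  have hd1 : 1 / (d : ℝ) ≤ 1 := by simpa using Nat.cast_inv_le_one (α := ℝ) d
  rw [centredCount_succ]
  split_ifs <;> nlinarith

lemma determinedAt_centredCount_mul_step_sub (a : G) (n : ℕ) :
    E.DeterminedAt (n + 1) fun ω =>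
      E.centredCount a n ω * ((if E.g (n + 1) ω = a then (1 : ℝ) else 0) - 1 / d) :=
  ((E.determinedAt_centredCount n).mono n.le_succ).comp₂ (E.determinedAt_g n.succ_pos)
    fun X b => X a * ((if b = a then (1 : ℝ) else 0) - 1 / d)

lemma integral_centredCount_mul_step_sub_eq [IsProbabilityMeasure P] (hd : 1 < d) (hn : 1 ≤ n)
    (ha : a ∈ E.S) :
    ∫ ω, E.centredCount a n ω * ((if E.g (n + 1) ω = a then 1 else 0) - 1 / d) ∂P
      = memoryExponent p d / n * ∫ ω, E.centredCount a n ω ^ 2 ∂P := by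
  have hX : E.DeterminedAt n (E.centredCount a n) := (E.determinedAt_centredCount n).comp (· a)
  have ha' : E.DeterminedAt n fun _ => a := fun _ _ _ => rfl
  have hXstep : Integrable
      (fun ω => E.centredCount a n ω * (if E.g (n + 1) ω = a then 1 else 0)) P :=
    ((hX.mono n.le_succ).comp₂ (E.determinedAt_succ_indicator ha') (· * ·)).integrable
  have hXprob : Integrable (fun ω => E.centredCount a n ω * E.stepProb a n ω) P :=
    (hX.comp₂ (E.determinedAt_stepProb ha') (· * ·)).integrable
  have hXconst : Integrable (fun ω => E.centredCount a n ω * (1 / d)) P :=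
    hX.integrable.mul_const _
  simp only [mul_sub]
  rw [integral_sub hXstep hXconst, E.integral_mul_indicator_eq hn hX ha' fun _ _ => ha,
    ← integral_sub hXprob hXconst, ← integral_const_mul]
  congr 1 with ω
  rw [E.stepProb_eq hd (by omega)]
  ring

lemma integral_sq_centredCount_succ_le [IsProbabilityMeasure P] (hd : 1 < d) (hn : 1 ≤ n)
    (ha : a ∈ E.S) :
    ∫ ω, E.centredCount a (n + 1) ω ^ 2 ∂P
      ≤ (1 + 2 * memoryExponent p d / n) * ∫ ω, E.centredCount a n ω ^ 2 ∂P + 1 := by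
  calc ∫ ω, E.centredCount a (n + 1) ω ^ 2 ∂P
      ≤ ∫ ω, E.centredCount a n ω ^ 2 ∂P
        + 2 * ∫ ω, E.centredCount a n ω * ((if E.g (n + 1) ω = a then 1 else 0) - 1 / d) ∂P
        + 1 :=
        integral_le_integral_add_two_mul_integral_add_one (fun _ => sq_nonneg _)
          ((E.determinedAt_centredCount n).comp fun X => X a ^ 2).integrable
          (E.determinedAt_centredCount_mul_step_sub a n).integrable
          (E.sq_centredCount_succ_le a n)
    _ = (1 + 2 * memoryExponent p d / n) * ∫ ω, E.centredCount a n ω ^ 2 ∂P + 1 := by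
        rw [E.integral_centredCount_mul_step_sub_eq hd hn ha]
        ring

lemma integral_sq_centredCount_one_le [IsProbabilityMeasure P] (a : G) :
    ∫ ω, E.centredCount a 1 ω ^ 2 ∂P ≤ 1 := by
  have hd0 : 0 ≤ 1 / (d : ℝ) := by positivity
  have hd1 : 1 / (d : ℝ) ≤ 1 := by simpa using Nat.cast_inv_le_one (α := ℝ) d
  have hbound : ∀ ω, E.centredCount a 1 ω ^ 2 ≤ 1 := by
    intro ω
    have hcount1 : (E.count a 1 ω : ℝ) ≤ 1 := by exact_mod_cast E.count_le a 1 ω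
    rw [sq_le_one_iff_abs_le_one, abs_le, centredCount, Nat.cast_one]
    constructor <;> linarith [(E.count a 1 ω).cast_nonneg (α := ℝ)]
  simpa using integral_mono_of_nonneg (μ := P) (.of_forall fun _ => sq_nonneg _)
    (integrable_const 1) (.of_forall hbound)

end Counts

section Retreats

variable {n : ℕ} {ω : Ω}

lemma dist_pos_iff : 0 < E.dist n ω ↔ E.pos n ω ≠ 1 :=
  Nat.pos_iff_ne_zero.trans (E.tree.connected.dist_eq_zero_iff.trans eq_comm).not

lemma adj_pos_succ (n : ℕ) (ω : Ω) :
    (cayleyGraph E.S).Adj (E.pos n ω) (E.pos (n + 1) ω) :=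
  cayleyGraph_adj_mul_left E.one_not_mem (E.mem_S _ n.succ_pos ω) _

lemma gammaStep_spec (hpos : E.pos n ω ≠ 1) :
    E.gammaStep n ω ∈ E.S ∧
      (cayleyGraph E.S).dist 1 (E.gammaStep n ω * E.pos n ω) + 1 = E.dist n ω := by
  obtain ⟨y, hadj, hdist⟩ := exists_adj_dist_add_one_eq E.tree.connected hpos
  obtain ⟨s, hs, rfl⟩ := exists_mem_eq_mul_of_cayleyGraph_adj E.symm_S hadj
  have hexists : ∃ s, s ∈ E.S ∧ (cayleyGraph E.S).dist 1 (s * E.pos n ω) + 1 = E.dist n ω :=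
    ⟨s, hs, hdist⟩
  exact Classical.epsilon_spec hexists

lemma dist_succ_add_one_eq_iff :
    E.dist (n + 1) ω + 1 = E.dist n ω ↔ E.pos n ω ≠ 1 ∧ E.g (n + 1) ω = E.gammaStep n ω := by
  constructor
  · intro hdist
    have hpos : E.pos n ω ≠ 1 := E.dist_pos_iff.1 (by omega)
    obtain ⟨hmem, hgamma⟩ := E.gammaStep_spec hpos
    exact ⟨hpos, mul_right_cancel (eq_of_adj_of_dist_add_one_eq E.tree (E.adj_pos_succ n ω)
      (cayleyGraph_adj_mul_left E.one_not_mem hmem _) hdist hgamma)⟩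
  · rintro ⟨hpos, hstep⟩
    rw [← (E.gammaStep_spec hpos).2, ← hstep]
    rfl

/-- The indicator that step `n + 1` leads towards the root. -/
def retreat (n : ℕ) (ω : Ω) : ℝ :=
  if E.dist (n + 1) ω + 1 = E.dist n ω then 1 else 0

lemma cast_dist_succ (n : ℕ) (ω : Ω) :
    (E.dist (n + 1) ω : ℝ) = E.dist n ω + 1 - 2 * E.retreat n ω := by
  rcases E.tree.dist_eq_dist_add_one_of_adj 1 (E.adj_pos_succ n ω) with htowards | haway
  · replace htowards : E.dist n ω = E.dist (n + 1) ω + 1 := htowards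
    rw [retreat, if_pos htowards.symm, htowards]
    push_cast
    ring
  · replace haway : E.dist (n + 1) ω = E.dist n ω + 1 := haway
    rw [retreat, if_neg (by omega), haway]
    push_cast
    ring

lemma cast_dist_eq (n : ℕ) (ω : Ω) :
    (E.dist n ω : ℝ) = n - 2 * ∑ k ∈ Finset.range n, E.retreat k ω := by
  induction n with
  | zero => simp [dist, pos]
  | succ n ih =>
    rw [cast_dist_succ, ih, Finset.sum_range_succ]
    push_cast
    ring

/-- The indicator that the walk is at the root at time `n`. -/
def atRoot (n : ℕ) (ω : Ω) : ℝ :=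
  if E.pos n ω = 1 then 1 else 0

lemma atRoot_nonneg (n : ℕ) (ω : Ω) : 0 ≤ E.atRoot n ω := by
  unfold atRoot
  positivity

lemma atRoot_le_one (n : ℕ) (ω : Ω) : E.atRoot n ω ≤ 1 := by
  unfold atRoot
  split_ifs <;> norm_num

lemma determinedAt_atRoot (n : ℕ) : E.DeterminedAt n (E.atRoot n) :=
  (E.determinedAt_pos n).comp fun x => if x = 1 then 1 else 0

lemma retreat_eq (n : ℕ) (ω : Ω) :
    E.retreat n ω = (1 - E.atRoot n ω) * if E.g (n + 1) ω = E.gammaStep n ω then 1 else 0 := by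
  simp only [retreat, atRoot, dist_succ_add_one_eq_iff]
  split_ifs <;> simp_all

/-- The conditional probability that step `n + 1` leads towards the root, given the first `n`
steps. -/
def retreatProb (n : ℕ) (ω : Ω) : ℝ :=
  (1 - E.atRoot n ω) * E.stepProb (E.gammaStep n ω) n ω

lemma determinedAt_retreat (n : ℕ) : E.DeterminedAt (n + 1) (E.retreat n) :=
  (E.determinedAt_dist (n + 1)).comp₂ ((E.determinedAt_dist n).mono n.le_succ)
    fun k l => if k + 1 = l then 1 else 0

lemma determinedAt_retreatProb (n : ℕ) : E.DeterminedAt n (E.retreatProb n) :=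
  (E.determinedAt_atRoot n).comp₂ (E.determinedAt_stepProb (E.determinedAt_gammaStep n))
    fun z q => (1 - z) * q

lemma atRoot_zero (ω : Ω) : E.atRoot 0 ω = 1 := if_pos rfl

/-- The martingale difference obtained by centring the indicator of a retreat. -/
def retreatNoise (n : ℕ) (ω : Ω) : ℝ :=
  E.retreat n ω - E.retreatProb n ω

lemma determinedAt_retreatNoise (n : ℕ) : E.DeterminedAt (n + 1) (E.retreatNoise n) :=
  (E.determinedAt_retreat n).comp₂ ((E.determinedAt_retreatProb n).mono n.le_succ) (· - ·)

lemma integral_mul_retreatNoise_eq_zero [IsFiniteMeasure P] {F : Ω → ℝ}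
    (hF : E.DeterminedAt n F) : ∫ ω, F ω * E.retreatNoise n ω ∂P = 0 := by
  rcases n.eq_zero_or_pos with rfl | hn
  · simp [retreatNoise, retreat_eq, retreatProb, atRoot_zero]
  have hFaway : E.DeterminedAt n fun ω => F ω * (1 - E.atRoot n ω) :=
    hF.comp₂ (E.determinedAt_atRoot n) fun x z => x * (1 - z)
  have hmem : ∀ ω, F ω * (1 - E.atRoot n ω) ≠ 0 → E.gammaStep n ω ∈ E.S := by
    refine fun ω hne => (E.gammaStep_spec fun hpos => hne ?_).1
    simp only [atRoot, if_pos hpos, sub_self, mul_zero]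
  have hretreat : Integrable (fun ω => F ω * E.retreat n ω) P :=
    ((hF.mono n.le_succ).comp₂ (E.determinedAt_retreat n) (· * ·)).integrable
  have hprob : Integrable (fun ω => F ω * E.retreatProb n ω) P :=
    (hF.comp₂ (E.determinedAt_retreatProb n) (· * ·)).integrable
  simp only [retreatNoise, mul_sub]
  rw [integral_sub hretreat hprob, sub_eq_zero]
  simp only [retreat_eq, retreatProb, ← mul_assoc]
  exact E.integral_mul_indicator_eq hn hFaway (E.determinedAt_gammaStep n) hmem

/-- The martingale part of the number of retreats among the first `n` steps. -/
def compensatedRetreats (n : ℕ) (ω : Ω) : ℝ :=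
  ∑ k ∈ Finset.range n, E.retreatNoise k ω

lemma determinedAt_compensatedRetreats (n : ℕ) : E.DeterminedAt n (E.compensatedRetreats n) :=
  .sum fun k hk => (E.determinedAt_retreatNoise k).mono (Finset.mem_range.1 hk)

-- For `U ∈ {0, 1}` and `D = U - Q` one has `D² ≤ 1 - 2 Q D`, whatever the value of `Q`.
lemma sq_compensatedRetreats_succ_le (n : ℕ) (ω : Ω) :
    E.compensatedRetreats (n + 1) ω ^ 2
      ≤ E.compensatedRetreats n ω ^ 2
        + 2 * ((E.compensatedRetreats n ω - E.retreatProb n ω) * E.retreatNoise n ω) + 1 := by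
  have hretreat : E.retreat n ω ^ 2 ≤ 1 := by
    unfold retreat
    split_ifs <;> norm_num
  simp only [compensatedRetreats, Finset.sum_range_succ, retreatNoise]
  nlinarith [sq_nonneg (E.retreatProb n ω)]

lemma integral_sq_compensatedRetreats_le [IsProbabilityMeasure P] (n : ℕ) :
    ∫ ω, E.compensatedRetreats n ω ^ 2 ∂P ≤ n := by
  induction n with
  | zero => simp [compensatedRetreats]
  | succ n ih =>
    have hW := E.determinedAt_compensatedRetreats n
    have hpredictable : E.DeterminedAt n fun ω => E.compensatedRetreats n ω - E.retreatProb n ω :=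
      hW.comp₂ (E.determinedAt_retreatProb n) (· - ·)
    have hcross := E.integral_mul_retreatNoise_eq_zero hpredictable
    have hstep := integral_le_integral_add_two_mul_integral_add_one (P := P)
      (fun _ => sq_nonneg _) (hW.comp (· ^ 2)).integrable
      ((hpredictable.mono n.le_succ).comp₂ (E.determinedAt_retreatNoise n) (· * ·)).integrable
      (E.sq_compensatedRetreats_succ_le n)
    rw [hcross] at hstep
    push_cast
    linarith

end Retreats

section Decomposition

variable {n : ℕ} {ω : Ω}

/-- The summand `ℓ n / n - 1(Δ n > 0) / d` of `Xi`. -/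
def ellDeviation (n : ℕ) (ω : Ω) : ℝ :=
  (E.ell n ω : ℝ) / n - (if 0 < E.dist n ω then 1 else 0) / d

lemma natCast_mul_Xi (n : ℕ) (ω : Ω) :
    n * E.Xi n ω = ∑ k ∈ Finset.range n, E.ellDeviation k ω := by
  rcases n.eq_zero_or_pos with rfl | hn
  · simp
  · rw [Xi, ← mul_assoc, mul_one_div_cancel (by positivity), one_mul]
    rfl

lemma ellDeviation_eq (n : ℕ) (ω : Ω) :
    E.ellDeviation n ω
      = (1 - E.atRoot n ω) * (E.centredCount (E.gammaStep n ω) n ω / n) := by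
  rcases n.eq_zero_or_pos with rfl | hn
  · simp [ellDeviation, dist, pos]
  by_cases hpos : E.pos n ω = 1
  · simp [ellDeviation, ell, atRoot, dist_pos_iff, hpos]
  · simp only [ellDeviation, ell, atRoot, dist_pos_iff, centredCount, hpos, if_false, if_true,
      ne_eq, not_false_eq_true]
    field_simp
    ring

lemma determinedAt_ellDeviation (n : ℕ) : E.DeterminedAt n (E.ellDeviation n) := by
  rw [show E.ellDeviation n = _ from funext (E.ellDeviation_eq n)]
  exact (E.determinedAt_atRoot n).comp₂
    ((E.determinedAt_gammaStep n).comp₂ (E.determinedAt_centredCount n) fun a X => X a / n)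
    fun z x => (1 - z) * x

lemma determinedAt_Xi (n : ℕ) : E.DeterminedAt n (E.Xi n) :=
  (DeterminedAt.sum fun k hk =>
    (E.determinedAt_ellDeviation k).mono (Finset.mem_range.1 hk).le).comp (1 / (n : ℝ) * ·)

lemma retreatProb_eq (hd : 1 < d) (n : ℕ) (ω : Ω) :
    E.retreatProb n ω = (1 - E.atRoot n ω) / d + memoryExponent p d * E.ellDeviation n ω := by
  rcases n.eq_zero_or_pos with rfl | hn
  · simp [retreatProb, ellDeviation_eq, atRoot_zero]
  · rw [retreatProb, ellDeviation_eq, E.stepProb_eq hd hn.ne']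
    ring

/-- Half of the part of `n (d - 2) / d - Δ n` that does not come from visits to the root: the
martingale of compensated retreats plus the bias caused by uneven step counts. -/
def fluctuation (n : ℕ) (ω : Ω) : ℝ :=
  E.compensatedRetreats n ω + memoryExponent p d * (n * E.Xi n ω)

lemma determinedAt_fluctuation (n : ℕ) : E.DeterminedAt n (E.fluctuation n) :=
  (E.determinedAt_compensatedRetreats n).comp₂ (E.determinedAt_Xi n)
    fun w x => w + memoryExponent p d * (n * x)

lemma sum_retreat_eq (hd : 1 < d) (n : ℕ) (ω : Ω) :
    ∑ k ∈ Finset.range n, E.retreat k ω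
      = E.fluctuation n ω + (n - ∑ k ∈ Finset.range n, E.atRoot k ω) / d := by
  have hterm : ∀ k, E.retreat k ω = E.retreatNoise k ω
      + memoryExponent p d * E.ellDeviation k ω + (1 - E.atRoot k ω) / d := by
    intro k
    rw [retreatNoise, E.retreatProb_eq hd]
    ring
  simp only [hterm, Finset.sum_add_distrib, ← Finset.sum_div, Finset.sum_sub_distrib,
    ← Finset.mul_sum, fluctuation, natCast_mul_Xi, compensatedRetreats, Finset.sum_const,
    Finset.card_range, nsmul_eq_mul, mul_one]

lemma dist_sub_eq (hd : 1 < d) (n : ℕ) (ω : Ω) :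
    (E.dist n ω : ℝ) - n * ((d - 2) / d)
      = 2 / d * ∑ k ∈ Finset.range n, E.atRoot k ω - 2 * E.fluctuation n ω := by
  rw [cast_dist_eq, E.sum_retreat_eq hd]
  field_simp
  ring

-- At the root the fluctuations must cancel the whole linear drift `n (d - 2) / d`.
lemma sq_mul_atRoot_le (hd : 2 < d) (n : ℕ) (ω : Ω) :
    (n * (((d : ℝ) - 2) / d)) ^ 2 * E.atRoot n ω ≤ 4 * E.fluctuation n ω ^ 2 := by
  unfold atRoot
  split_ifs with hpos
  · have hdecomp := E.dist_sub_eq (by omega) n ω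
    have hdist : E.dist n ω = 0 := by simp [dist, hpos]
    have hvisits : 0 ≤ 2 / (d : ℝ) * ∑ k ∈ Finset.range n, E.atRoot k ω :=
      mul_nonneg (by positivity) (Finset.sum_nonneg fun k _ => E.atRoot_nonneg k ω)
    have hspeed : 0 ≤ n * (((d : ℝ) - 2) / d) := by
      have hd2 : (2 : ℝ) ≤ d := by exact_mod_cast hd.le
      exact mul_nonneg n.cast_nonneg (div_nonneg (by linarith) (by linarith))
    rw [hdist, Nat.cast_zero] at hdecomp
    calc (n * (((d : ℝ) - 2) / d)) ^ 2 * 1 ≤ (2 * E.fluctuation n ω) ^ 2 := by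
          rw [mul_one]
          exact pow_le_pow_left₀ hspeed (by linarith) 2
      _ = 4 * E.fluctuation n ω ^ 2 := by ring
  · rw [mul_zero]
    positivity

lemma sq_sum_atRoot_le (n : ℕ) (ω : Ω) :
    (∑ k ∈ Finset.range n, E.atRoot k ω) ^ 2 ≤ n * ∑ k ∈ Finset.range n, E.atRoot k ω := by
  have hnonneg : 0 ≤ ∑ k ∈ Finset.range n, E.atRoot k ω :=
    Finset.sum_nonneg fun k _ => E.atRoot_nonneg k ω
  have hle : ∑ k ∈ Finset.range n, E.atRoot k ω ≤ n := by
    simpa using Finset.sum_le_card_nsmul (Finset.range n) _ 1 fun k _ => E.atRoot_le_one k ω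
  rw [sq]
  gcongr

lemma sq_dist_sub_le (hd : 1 < d) (n : ℕ) (ω : Ω) :
    ((E.dist n ω : ℝ) - n * ((d - 2) / d)) ^ 2
      ≤ 8 * E.fluctuation n ω ^ 2 + 2 * (n * ∑ k ∈ Finset.range n, E.atRoot k ω) := by
  have hd2 : 2 / (d : ℝ) ≤ 1 := by
    rw [div_le_one (by positivity)]
    exact_mod_cast hd
  have hvisits : (2 / (d : ℝ) * ∑ k ∈ Finset.range n, E.atRoot k ω) ^ 2
      ≤ n * ∑ k ∈ Finset.range n, E.atRoot k ω := by
    rw [mul_pow]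
    exact (mul_le_of_le_one_left (sq_nonneg _) (pow_le_one₀ (by positivity) hd2)).trans
      (E.sq_sum_atRoot_le n ω)
  rw [E.dist_sub_eq hd, sub_eq_add_neg]
  exact add_sq_le.trans (by linarith)

lemma sq_ellDeviation_le_sum (n : ℕ) (ω : Ω) :
    E.ellDeviation n ω ^ 2 ≤ ∑ a ∈ E.S, E.centredCount a n ω ^ 2 / n ^ 2 := by
  have hterm : ∀ a ∈ E.S, 0 ≤ E.centredCount a n ω ^ 2 / (n : ℝ) ^ 2 := fun _ _ => by positivity
  rw [ellDeviation_eq, atRoot]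
  split_ifs with hpos
  · simpa using Finset.sum_nonneg hterm
  · simpa [div_pow] using Finset.single_le_sum hterm (E.gammaStep_spec hpos).1

end Decomposition

section SecondMoments

variable {n : ℕ}

/-- The mean-square error `E|Δ n / n - (d - 2) / d|²` of the empirical speed. -/
def meanSqSpeedError (n : ℕ) : ℝ :=
  ∫ ω, |(E.dist n ω : ℝ) / n - ((d : ℝ) - 2) / d| ^ 2 ∂P

variable [IsProbabilityMeasure P] {B D : ℝ}

lemma integral_sq_ellDeviation_le (hn : n ≠ 0)
    (hD : ∀ a ∈ E.S, ∫ ω, E.centredCount a n ω ^ 2 ∂P ≤ D * n) :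
    ∫ ω, E.ellDeviation n ω ^ 2 ∂P ≤ d * D / n := by
  have hint : ∀ a ∈ E.S, Integrable (fun ω => E.centredCount a n ω ^ 2 / (n : ℝ) ^ 2) P :=
    fun a _ => ((E.determinedAt_centredCount n).comp fun X => X a ^ 2 / (n : ℝ) ^ 2).integrable
  calc ∫ ω, E.ellDeviation n ω ^ 2 ∂P
      ≤ ∫ ω, ∑ a ∈ E.S, E.centredCount a n ω ^ 2 / (n : ℝ) ^ 2 ∂P :=
        integral_mono_of_nonneg (.of_forall fun _ => sq_nonneg _) (integrable_finsetSum _ hint)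
          (.of_forall (E.sq_ellDeviation_le_sum n))
    _ = ∑ a ∈ E.S, (∫ ω, E.centredCount a n ω ^ 2 ∂P) / (n : ℝ) ^ 2 := by
        simp only [integral_finsetSum _ hint, integral_div]
    _ ≤ ∑ _a ∈ E.S, D * n / (n : ℝ) ^ 2 := by
        gcongr with a ha
        exact hD a ha
    _ = d * D / n := by
        rw [Finset.sum_const, E.card_S, nsmul_eq_mul]
        field_simp

lemma integral_sq_natCast_mul_Xi_le (hD0 : 0 ≤ D)
    (hD : ∀ k ∈ Finset.Ico 1 n, ∀ a ∈ E.S, ∫ ω, E.centredCount a k ω ^ 2 ∂P ≤ D * k) :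
    ∫ ω, (n * E.Xi n ω) ^ 2 ∂P ≤ 4 * (d * D) * n := by
  have hsum : ∀ ω, n * E.Xi n ω = ∑ k ∈ Finset.Ico 1 n, E.ellDeviation k ω := by
    intro ω
    rcases n.eq_zero_or_pos with rfl | hn
    · simp
    · rw [natCast_mul_Xi, Finset.range_eq_Ico, Finset.sum_eq_sum_Ico_succ_bot hn,
        ellDeviation_eq, atRoot_zero, sub_self, zero_mul, zero_add]
  simp only [hsum]
  refine integral_sq_sum_Ico_le (by positivity)
    (fun k _ => ((E.determinedAt_ellDeviation k).comp (· ^ 2)).integrable) fun k hk => ?_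
  exact E.integral_sq_ellDeviation_le (by linarith [(Finset.mem_Ico.1 hk).1]) (hD k hk)

lemma integrable_sq_fluctuation (n : ℕ) : Integrable (fun ω => E.fluctuation n ω ^ 2) P :=
  ((E.determinedAt_fluctuation n).comp (· ^ 2)).integrable

lemma integral_sq_fluctuation_le (hD0 : 0 ≤ D)
    (hD : ∀ k ∈ Finset.Ico 1 n, ∀ a ∈ E.S, ∫ ω, E.centredCount a k ω ^ 2 ∂P ≤ D * k) :
    ∫ ω, E.fluctuation n ω ^ 2 ∂P ≤ (2 + 8 * memoryExponent p d ^ 2 * (d * D)) * n := by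
  have hmart : Integrable (fun ω => E.compensatedRetreats n ω ^ 2) P :=
    ((E.determinedAt_compensatedRetreats n).comp (· ^ 2)).integrable
  have hbias : Integrable (fun ω => (n * E.Xi n ω) ^ 2) P :=
    ((E.determinedAt_Xi n).comp fun x => (n * x) ^ 2).integrable
  have hpointwise : ∀ ω, E.fluctuation n ω ^ 2
      ≤ 2 * E.compensatedRetreats n ω ^ 2 + 2 * memoryExponent p d ^ 2 * (n * E.Xi n ω) ^ 2 :=
    fun ω => add_sq_le.trans_eq (by ring)
  calc ∫ ω, E.fluctuation n ω ^ 2 ∂P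
      ≤ ∫ ω, (2 * E.compensatedRetreats n ω ^ 2
          + 2 * memoryExponent p d ^ 2 * (n * E.Xi n ω) ^ 2) ∂P :=
        integral_mono_of_nonneg (.of_forall fun _ => sq_nonneg _)
          ((hmart.const_mul _).add (hbias.const_mul _)) (.of_forall hpointwise)
    _ = 2 * ∫ ω, E.compensatedRetreats n ω ^ 2 ∂P
          + 2 * memoryExponent p d ^ 2 * ∫ ω, (n * E.Xi n ω) ^ 2 ∂P := by
        rw [integral_add (hmart.const_mul _) (hbias.const_mul _), integral_const_mul,
          integral_const_mul]
    _ ≤ 2 * n + 2 * memoryExponent p d ^ 2 * (4 * (d * D) * n) := by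
        gcongr
        · exact E.integral_sq_compensatedRetreats_le n
        · exact E.integral_sq_natCast_mul_Xi_le hD0 hD
    _ = (2 + 8 * memoryExponent p d ^ 2 * (d * D)) * n := by ring

lemma integral_atRoot_le (hd : 2 < d) (hn : n ≠ 0)
    (hB : ∫ ω, E.fluctuation n ω ^ 2 ∂P ≤ B * n) :
    ∫ ω, E.atRoot n ω ∂P ≤ 4 * B / (((d : ℝ) - 2) / d) ^ 2 / n := by
  have hspeed : 0 < ((d : ℝ) - 2) / d := by
    have hd2 : (2 : ℝ) < d := by exact_mod_cast hd
    exact div_pos (by linarith) (by linarith)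
  have hscaled : (n * (((d : ℝ) - 2) / d)) ^ 2 * ∫ ω, E.atRoot n ω ∂P ≤ 4 * (B * n) := by
    calc (n * (((d : ℝ) - 2) / d)) ^ 2 * ∫ ω, E.atRoot n ω ∂P
        = ∫ ω, (n * (((d : ℝ) - 2) / d)) ^ 2 * E.atRoot n ω ∂P := (integral_const_mul ..).symm
      _ ≤ ∫ ω, 4 * E.fluctuation n ω ^ 2 ∂P :=
          integral_mono_of_nonneg
            (.of_forall fun ω => mul_nonneg (sq_nonneg _) (E.atRoot_nonneg n ω))
            ((E.integrable_sq_fluctuation n).const_mul _) (.of_forall (E.sq_mul_atRoot_le hd n))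
      _ ≤ 4 * (B * n) := by
          rw [integral_const_mul]
          gcongr
  calc ∫ ω, E.atRoot n ω ∂P ≤ 4 * (B * n) / (n * (((d : ℝ) - 2) / d)) ^ 2 := by
        rwa [le_div_iff₀' (by positivity)]
    _ = 4 * B / (((d : ℝ) - 2) / d) ^ 2 / n := by field_simp

lemma meanSqSpeedError_le (hd : 1 < d) (hn : n ≠ 0)
    (hB : ∫ ω, E.fluctuation n ω ^ 2 ∂P ≤ B * n) :
    E.meanSqSpeedError n
      ≤ (8 * B + 2 * ∑ k ∈ Finset.range n, ∫ ω, E.atRoot k ω ∂P) / n := by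
  have hroot : ∀ k ∈ Finset.range n, Integrable (E.atRoot k) P :=
    fun k _ => (E.determinedAt_atRoot k).integrable
  have hvisits : Integrable (fun ω => 2 * (n * ∑ k ∈ Finset.range n, E.atRoot k ω)) P :=
    ((integrable_finsetSum _ hroot).const_mul _).const_mul _
  have hfluct := (E.integrable_sq_fluctuation n).const_mul 8
  calc E.meanSqSpeedError n
      = ∫ ω, ((E.dist n ω : ℝ) - n * ((d - 2) / d)) ^ 2 / n ^ 2 ∂P := by
        refine integral_congr_ae (.of_forall fun ω => ?_)
        simp only [sq_abs]
        field_simp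
    _ = (∫ ω, ((E.dist n ω : ℝ) - n * ((d - 2) / d)) ^ 2 ∂P) / n ^ 2 := integral_div _ _
    _ ≤ (∫ ω, (8 * E.fluctuation n ω ^ 2
          + 2 * (n * ∑ k ∈ Finset.range n, E.atRoot k ω)) ∂P) / n ^ 2 := by
        gcongr ?_ / _
        exact integral_mono_of_nonneg (.of_forall fun _ => sq_nonneg _) (hfluct.add hvisits)
          (.of_forall (E.sq_dist_sub_le hd n))
    _ = (8 * ∫ ω, E.fluctuation n ω ^ 2 ∂P
          + 2 * (n * ∑ k ∈ Finset.range n, ∫ ω, E.atRoot k ω ∂P)) / n ^ 2 := by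
        rw [integral_add hfluct hvisits, integral_const_mul, integral_const_mul,
          integral_const_mul, integral_finsetSum _ hroot]
    _ ≤ (8 * (B * n) + 2 * (n * ∑ k ∈ Finset.range n, ∫ ω, E.atRoot k ω ∂P)) / n ^ 2 := by
        gcongr
    _ = (8 * B + 2 * ∑ k ∈ Finset.range n, ∫ ω, E.atRoot k ω ∂P) / n := by field_simp

end SecondMoments

section Regimes

variable [IsProbabilityMeasure P] {h : ℕ → ℝ}

lemma integral_sq_fluctuation_le_of_monotoneOn (hone : ∀ n, 1 ≤ n → 1 ≤ h n)
    (hmono : MonotoneOn h (Set.Ici 1))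
    (hcount : ∀ n, 1 ≤ n → ∀ a ∈ E.S, ∫ ω, E.centredCount a n ω ^ 2 ∂P ≤ h n * n)
    {n : ℕ} (hn : 1 ≤ n) :
    ∫ ω, E.fluctuation n ω ^ 2 ∂P ≤ (2 + 8 * memoryExponent p d ^ 2 * d) * h n * n := by
  have hcount' : ∀ k ∈ Finset.Ico 1 n, ∀ a ∈ E.S,
      ∫ ω, E.centredCount a k ω ^ 2 ∂P ≤ h n * k := by
    intro k hk a ha
    obtain ⟨hk1, hkn⟩ := Finset.mem_Ico.1 hk
    exact (hcount k hk1 a ha).trans (by gcongr; exact hmono hk1 hn hkn.le)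
  calc ∫ ω, E.fluctuation n ω ^ 2 ∂P
      ≤ (2 * 1 + 8 * memoryExponent p d ^ 2 * (d * h n)) * n := by
        rw [mul_one]
        exact E.integral_sq_fluctuation_le (zero_le_one.trans (hone n hn)) hcount'
    _ ≤ (2 * h n + 8 * memoryExponent p d ^ 2 * (d * h n)) * n := by
        gcongr
        exact hone n hn
    _ = (2 + 8 * memoryExponent p d ^ 2 * d) * h n * n := by ring

lemma sum_range_integral_atRoot_le (hd : 2 < d) {b : ℝ} (hb : 0 ≤ b)
    (hone : ∀ n, 1 ≤ n → 1 ≤ h n)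
    (hfluct : ∀ n : ℕ, 1 ≤ n → ∫ ω, E.fluctuation n ω ^ 2 ∂P ≤ b * h n * n)
    {n : ℕ} (hn : 1 ≤ n) :
    ∑ k ∈ Finset.range n, ∫ ω, E.atRoot k ω ∂P
      ≤ 1 + 4 * b / (((d : ℝ) - 2) / d) ^ 2 * ∑ k ∈ Finset.Icc 1 n, h k / k := by
  have hterm : ∀ k ∈ Finset.Icc 1 n, 0 ≤ h k / k := fun k hk =>
    div_nonneg (zero_le_one.trans (hone k (Finset.mem_Icc.1 hk).1)) k.cast_nonneg
  calc ∑ k ∈ Finset.range n, ∫ ω, E.atRoot k ω ∂P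
      = 1 + ∑ k ∈ Finset.Ico 1 n, ∫ ω, E.atRoot k ω ∂P := by
        rw [Finset.range_eq_Ico, Finset.sum_eq_sum_Ico_succ_bot hn]
        simp [atRoot_zero]
    _ ≤ 1 + ∑ k ∈ Finset.Ico 1 n, 4 * b / (((d : ℝ) - 2) / d) ^ 2 * (h k / k) := by
        gcongr with k hk
        have hk1 := (Finset.mem_Ico.1 hk).1
        exact (E.integral_atRoot_le hd (by omega) (hfluct k hk1)).trans_eq (by ring)
    _ ≤ 1 + 4 * b / (((d : ℝ) - 2) / d) ^ 2 * ∑ k ∈ Finset.Icc 1 n, h k / k := by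
        rw [← Finset.mul_sum]
        gcongr
        · exact fun k hk _ => hterm k hk
        · exact Finset.Ico_subset_Icc_self

theorem exists_meanSqSpeedError_le (hd : 2 < d) (hone : ∀ n, 1 ≤ n → 1 ≤ h n)
    (hmono : MonotoneOn h (Set.Ici 1))
    (hcount : ∀ n, 1 ≤ n → ∀ a ∈ E.S, ∫ ω, E.centredCount a n ω ^ 2 ∂P ≤ h n * n) :
    ∃ K : ℝ, 0 < K ∧ ∀ n, 1 ≤ n →
      E.meanSqSpeedError n ≤ K * (h n + ∑ k ∈ Finset.Icc 1 n, h k / k) / n := by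
  set b : ℝ := 2 + 8 * memoryExponent p d ^ 2 * d
  set c : ℝ := 4 * b / (((d : ℝ) - 2) / d) ^ 2
  have hb : 0 ≤ b := by positivity
  have hc : 0 ≤ c := by positivity
  have hfluct : ∀ n : ℕ, 1 ≤ n → ∫ ω, E.fluctuation n ω ^ 2 ∂P ≤ b * h n * n := fun n hn =>
    E.integral_sq_fluctuation_le_of_monotoneOn hone hmono hcount hn
  refine ⟨8 * b + 2 + 2 * c, by positivity, fun n hn => ?_⟩
  have hsum : 0 ≤ ∑ k ∈ Finset.Icc 1 n, h k / k := Finset.sum_nonneg fun k hk =>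
    div_nonneg (zero_le_one.trans (hone k (Finset.mem_Icc.1 hk).1)) k.cast_nonneg
  have hhn := hone n hn
  refine (E.meanSqSpeedError_le (by omega) (by omega) (hfluct n hn)).trans ?_
  gcongr ?_ / _
  calc 8 * (b * h n) + 2 * ∑ k ∈ Finset.range n, ∫ ω, E.atRoot k ω ∂P
      ≤ 8 * (b * h n) + 2 * (h n + c * ∑ k ∈ Finset.Icc 1 n, h k / k) := by
        gcongr
        exact (E.sum_range_integral_atRoot_le hd hb hone hfluct hn).trans (by gcongr)
    _ ≤ (8 * b + 2 + 2 * c) * (h n + ∑ k ∈ Finset.Icc 1 n, h k / k) := by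
        linarith [mul_nonneg (add_nonneg (mul_nonneg (by norm_num : (0 : ℝ) ≤ 8) hb)
          zero_le_two) hsum, mul_nonneg hc (zero_le_one.trans hhn)]

lemma integral_sq_centredCount_le_of_memoryExponent_lt (hd : 1 < d)
    (hα0 : -(1 / 2) ≤ memoryExponent p d) (hα : memoryExponent p d < 1 / 2) {a : G}
    (ha : a ∈ E.S) {n : ℕ} (hn : 1 ≤ n) :
    ∫ ω, E.centredCount a n ω ^ 2 ∂P ≤ 2 / (1 - 2 * memoryExponent p d) * n :=
  le_mul_of_recursion_of_lt_one (x := fun n => ∫ ω, E.centredCount a n ω ^ 2 ∂P)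
    (by linarith) (by linarith) (E.integral_sq_centredCount_one_le a)
    (fun _ hk => E.integral_sq_centredCount_succ_le hd hk ha) hn

lemma integral_sq_centredCount_le_of_memoryExponent_eq (hd : 1 < d)
    (hα : memoryExponent p d = 1 / 2) {a : G} (ha : a ∈ E.S) {n : ℕ} (hn : 1 ≤ n) :
    ∫ ω, E.centredCount a n ω ^ 2 ∂P ≤ (1 + Real.log n) * n := by
  calc ∫ ω, E.centredCount a n ω ^ 2 ∂P ≤ harmonic n * n :=
        le_harmonic_mul_of_recursion (x := fun n => ∫ ω, E.centredCount a n ω ^ 2 ∂P)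
          (E.integral_sq_centredCount_one_le a)
          (fun _ hk => by simpa [hα] using E.integral_sq_centredCount_succ_le hd hk ha) hn
    _ ≤ (1 + Real.log n) * n := by
        gcongr
        exact harmonic_le_one_add_log n

lemma integral_sq_centredCount_le_of_lt_memoryExponent (hd : 1 < d)
    (hα : 1 / 2 < memoryExponent p d) {a : G} (ha : a ∈ E.S) {n : ℕ} (hn : 1 ≤ n) :
    ∫ ω, E.centredCount a n ω ^ 2 ∂P
      ≤ (1 + 1 / (2 * memoryExponent p d - 1)) * (n : ℝ) ^ (2 * memoryExponent p d - 1) * n := by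
  have hrec := add_le_rpow_of_recursion_of_one_lt
    (x := fun n => ∫ ω, E.centredCount a n ω ^ 2 ∂P) (by linarith)
    (E.integral_sq_centredCount_one_le a)
    (fun _ hk => E.integral_sq_centredCount_succ_le hd hk ha) hn
  have hgap : 0 < 2 * memoryExponent p d - 1 := by linarith
  have hlinear : 0 ≤ (n : ℝ) / (2 * memoryExponent p d - 1) := by positivity
  rw [mul_assoc, ← Real.rpow_add_one (by positivity), sub_add_cancel]
  exact (le_add_of_nonneg_right hlinear).trans hrec

lemma exists_meanSqSpeedError_le_of_memoryExponent_lt (hd : 2 < d)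
    (hα0 : -(1 / 2) ≤ memoryExponent p d) (hα : memoryExponent p d < 1 / 2) :
    ∃ K : ℝ, 0 < K ∧ ∀ n, 1 ≤ n → E.meanSqSpeedError n ≤ K * (1 + Real.log n) / n := by
  set D := 2 / (1 - 2 * memoryExponent p d)
  have hD : 1 ≤ D := by
    rw [one_le_div (by linarith)]
    linarith
  obtain ⟨K, hK, hbound⟩ := E.exists_meanSqSpeedError_le (h := fun _ => D) hd (fun _ _ => hD)
    monotoneOn_const fun n hn a ha =>
      E.integral_sq_centredCount_le_of_memoryExponent_lt (by omega) hα0 hα ha hn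
  refine ⟨K * (2 * D), by positivity, fun n hn => (hbound n hn).trans ?_⟩
  have hlog : 0 ≤ Real.log n := Real.log_natCast_nonneg n
  gcongr ?_ / _
  calc K * (D + ∑ k ∈ Finset.Icc 1 n, D / k)
      = K * D * (1 + ∑ k ∈ Finset.Icc 1 n, 1 / (k : ℝ)) := by
        simp only [← mul_one_div D, ← Finset.mul_sum]
        ring
    _ ≤ K * D * (1 + (1 + Real.log n)) := by
        gcongr
        exact sum_Icc_one_div_le_one_add_log n
    _ ≤ K * D * (2 * (1 + Real.log n)) := by
        gcongr
        linarith
    _ = K * (2 * D) * (1 + Real.log n) := by ring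

lemma exists_meanSqSpeedError_le_of_memoryExponent_eq (hd : 2 < d)
    (hα : memoryExponent p d = 1 / 2) :
    ∃ K : ℝ, 0 < K ∧ ∀ n, 1 ≤ n → E.meanSqSpeedError n ≤ K * (1 + Real.log n) ^ 2 / n := by
  have hone : ∀ n : ℕ, 1 ≤ n → 1 ≤ 1 + Real.log n := fun n _ => by
    simpa using Real.log_natCast_nonneg n
  obtain ⟨K, hK, hbound⟩ := E.exists_meanSqSpeedError_le hd hone monotoneOn_one_add_log
    fun n hn a ha => E.integral_sq_centredCount_le_of_memoryExponent_eq (by omega) hα ha hn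
  refine ⟨K * 2, by positivity, fun n hn => (hbound n hn).trans ?_⟩
  gcongr ?_ / _
  calc K * (1 + Real.log n + ∑ k ∈ Finset.Icc 1 n, (1 + Real.log k) / k)
      ≤ K * ((1 + Real.log n) ^ 2 + (1 + Real.log n) ^ 2) := by
        gcongr
        · exact le_self_pow₀ (hone n hn) two_ne_zero
        · exact sum_Icc_one_add_log_div_le n
    _ = K * 2 * (1 + Real.log n) ^ 2 := by ring

lemma exists_meanSqSpeedError_le_of_lt_memoryExponent (hd : 2 < d)
    (hα : 1 / 2 < memoryExponent p d) (hα1 : memoryExponent p d ≤ 1) :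
    ∃ K : ℝ, 0 < K ∧ ∀ n : ℕ, 1 ≤ n →
      E.meanSqSpeedError n ≤ K * (n : ℝ) ^ (2 * memoryExponent p d - 2) := by
  obtain ⟨q, hq⟩ : ∃ q, q = 2 * memoryExponent p d - 1 := ⟨_, rfl⟩
  have hq0 : 0 < q := by linarith
  have hone : ∀ n : ℕ, 1 ≤ n → 1 ≤ (1 + 1 / q) * (n : ℝ) ^ q := fun n hn =>
    one_le_mul_of_one_le_of_one_le (le_add_of_nonneg_right (by positivity))
      (Real.one_le_rpow (by exact_mod_cast hn) hq0.le)
  have hmono : MonotoneOn (fun n : ℕ => (1 + 1 / q) * (n : ℝ) ^ q) (Set.Ici 1) := by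
    intro m _ n _ hmn
    simp only
    gcongr
  obtain ⟨K, hK, hbound⟩ := E.exists_meanSqSpeedError_le hd hone hmono fun n hn a ha => by
    simpa only [hq] using E.integral_sq_centredCount_le_of_lt_memoryExponent (by omega) hα ha hn
  refine ⟨K * (1 + 1 / q) ^ 2, by positivity, fun n hn => (hbound n hn).trans ?_⟩
  calc K * ((1 + 1 / q) * (n : ℝ) ^ q + ∑ k ∈ Finset.Icc 1 n, (1 + 1 / q) * (k : ℝ) ^ q / k) / n
      ≤ K * ((1 + 1 / q) * (n : ℝ) ^ q + (1 + 1 / q) * ((n : ℝ) ^ q / q)) / n := by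
        simp only [mul_div_assoc (1 + 1 / q), ← Finset.mul_sum]
        gcongr
        exact sum_Icc_rpow_div_le hq0 (by linarith) n
    _ = K * (1 + 1 / q) ^ 2 * ((n : ℝ) ^ q / n) := by ring
    _ = K * (1 + 1 / q) ^ 2 * (n : ℝ) ^ (2 * memoryExponent p d - 2) := by
        rw [← Real.rpow_sub_one (by positivity), hq]
        ring_nf

end Regimes

end ERW

section Rate

open ERW

variable {p : ℝ} {d : ℕ}

lemma memoryExponent_lt_half_iff (hd : 1 < d) :
    memoryExponent p d < 1 / 2 ↔ p < ((d : ℝ) + 1) / (2 * d) := by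
  have hd1 : (1 : ℝ) < d := by exact_mod_cast hd
  rw [memoryExponent, div_lt_div_iff₀ (by linarith) two_pos, lt_div_iff₀ (by linarith)]
  constructor <;> intro h <;> linarith

lemma half_lt_memoryExponent_iff (hd : 1 < d) :
    1 / 2 < memoryExponent p d ↔ ((d : ℝ) + 1) / (2 * d) < p := by
  have hd1 : (1 : ℝ) < d := by exact_mod_cast hd
  rw [memoryExponent, div_lt_div_iff₀ two_pos (by linarith), div_lt_iff₀ (by linarith)]
  constructor <;> intro h <;> linarith

lemma memoryExponent_critical (hd : 1 < d) :
    memoryExponent (((d : ℝ) + 1) / (2 * d)) d = 1 / 2 := by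
  have hd1 : (1 : ℝ) < d := by exact_mod_cast hd
  have hd2 : (d : ℝ) - 1 ≠ 0 := by linarith
  rw [memoryExponent]
  field_simp
  ring

lemma neg_half_le_memoryExponent (hd : 3 ≤ d) (hp : 0 ≤ p) :
    -(1 / 2) ≤ memoryExponent p d := by
  have hd3 : (3 : ℝ) ≤ d := by exact_mod_cast hd
  rw [memoryExponent, le_div_iff₀ (by linarith)]
  nlinarith [mul_nonneg hp d.cast_nonneg]

lemma memoryExponent_le_one (hd : 1 < d) (hp : p ≤ 1) : memoryExponent p d ≤ 1 := by
  have hd1 : (1 : ℝ) < d := by exact_mod_cast hd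
  rw [memoryExponent, div_le_one (by linarith)]
  nlinarith

lemma sq_rate_of_lt (hp : p < ((d : ℝ) + 1) / (2 * d)) (n : ℕ) : rate p d n ^ 2 = n := by
  rw [rate, if_pos hp, Real.sq_sqrt n.cast_nonneg]

lemma sq_rate_critical (d n : ℕ) :
    rate (((d : ℝ) + 1) / (2 * d)) d n ^ 2 = n / Real.log n := by
  rw [rate, if_neg (lt_irrefl _), if_pos rfl,
    Real.sq_sqrt (div_nonneg n.cast_nonneg (Real.log_natCast_nonneg n))]

lemma sq_rate_of_gt (hd : 1 < d) (hp : ((d : ℝ) + 1) / (2 * d) < p) (n : ℕ) :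
    rate p d n ^ 2 = (n : ℝ) ^ (2 - 2 * memoryExponent p d) := by
  have hd1 : (d : ℝ) - 1 ≠ 0 := sub_ne_zero.2 (by exact_mod_cast hd.ne')
  rw [rate, if_neg hp.not_gt, if_neg hp.ne', ← Real.rpow_mul_natCast n.cast_nonneg]
  congr 1
  simp only [memoryExponent]
  field_simp
  push_cast
  ring

lemma one_add_log_le_three_mul_log {n : ℕ} (hn : 2 ≤ n) : 1 + Real.log n ≤ 3 * Real.log n := by
  have hlog : Real.log 2 ≤ Real.log n := Real.log_le_log two_pos (by exact_mod_cast hn)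
  linarith [Real.log_two_gt_d9]

end Rate

namespace ERW

variable {G : Type*} [Group G] [DecidableEq G] {d : ℕ} {p : ℝ} {Ω : Type*} [MeasurableSpace Ω]
  {P : Measure Ω} [IsProbabilityMeasure P] (E : ERW G d p Ω P)

theorem exists_sq_rate_mul_meanSqSpeedError_le_of_lt (hd : 3 ≤ d) (hp0 : 0 ≤ p)
    (hp : p < ((d : ℝ) + 1) / (2 * d)) :
    ∃ C : ℝ, 0 < C ∧ ∀ n : ℕ, 2 ≤ n → rate p d n ^ 2 * E.meanSqSpeedError n ≤ C * Real.log n := by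
  obtain ⟨K, hK, hbound⟩ := E.exists_meanSqSpeedError_le_of_memoryExponent_lt (by omega)
    (neg_half_le_memoryExponent hd hp0) ((memoryExponent_lt_half_iff (by omega)).2 hp)
  refine ⟨K * 3, by positivity, fun n hn => ?_⟩
  calc rate p d n ^ 2 * E.meanSqSpeedError n ≤ n * (K * (1 + Real.log n) / n) := by
        rw [sq_rate_of_lt hp]
        gcongr
        exact hbound n (by omega)
    _ = K * (1 + Real.log n) := by field_simp
    _ ≤ K * (3 * Real.log n) := by
        gcongr
        exact one_add_log_le_three_mul_log hn
    _ = K * 3 * Real.log n := by ring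

theorem exists_sq_rate_mul_meanSqSpeedError_le_of_eq (hd : 3 ≤ d)
    (hp : p = ((d : ℝ) + 1) / (2 * d)) :
    ∃ C : ℝ, 0 < C ∧ ∀ n : ℕ, 2 ≤ n → rate p d n ^ 2 * E.meanSqSpeedError n ≤ C * Real.log n := by
  subst hp
  obtain ⟨K, hK, hbound⟩ := E.exists_meanSqSpeedError_le_of_memoryExponent_eq (by omega)
    (memoryExponent_critical (by omega))
  refine ⟨K * 9, by positivity, fun n hn => ?_⟩
  have hlog : 0 < Real.log n := Real.log_pos (by exact_mod_cast hn)
  calc rate _ d n ^ 2 * E.meanSqSpeedError n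
      ≤ n / Real.log n * (K * (1 + Real.log n) ^ 2 / n) := by
        rw [sq_rate_critical]
        gcongr
        exact hbound n (by omega)
    _ = K * (1 + Real.log n) ^ 2 / Real.log n := by field_simp
    _ ≤ K * (3 * Real.log n) ^ 2 / Real.log n := by
        gcongr
        exact one_add_log_le_three_mul_log hn
    _ = K * 9 * Real.log n := by
        field_simp
        norm_num

theorem exists_sq_rate_mul_meanSqSpeedError_le_of_gt (hd : 3 ≤ d) (hp1 : p ≤ 1)
    (hp : ((d : ℝ) + 1) / (2 * d) < p) :
    ∃ C : ℝ, 0 < C ∧ ∀ n : ℕ, 1 ≤ n → rate p d n ^ 2 * E.meanSqSpeedError n ≤ C := by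
  obtain ⟨K, hK, hbound⟩ := E.exists_meanSqSpeedError_le_of_lt_memoryExponent (by omega)
    ((half_lt_memoryExponent_iff (by omega)).2 hp) (memoryExponent_le_one (by omega) hp1)
  refine ⟨K, hK, fun n hn => ?_⟩
  have hn0 : (0 : ℝ) < n := by exact_mod_cast hn
  calc rate p d n ^ 2 * E.meanSqSpeedError n
      ≤ (n : ℝ) ^ (2 - 2 * memoryExponent p d)
        * (K * (n : ℝ) ^ (2 * memoryExponent p d - 2)) := by
        rw [sq_rate_of_gt (by omega) hp]
        gcongr
        exact hbound n hn
    _ = K * (n : ℝ) ^ (2 - 2 * memoryExponent p d + (2 * memoryExponent p d - 2)) := by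
        rw [Real.rpow_add hn0]
        ring
    _ = K := by
        rw [sub_add_sub_cancel, sub_self, Real.rpow_zero, mul_one]

end ERW

/-- the second-moment rate of convergence of the speed: if `p ≤ p_d`
then `E|Δ n / n - (d-2)/d|^2 ≤ C * r n ^ (-2) * log n` for n ≥ 2, and if `p > p_d`
then `E|Δ n / n - (d-2)/d|^2 ≤ C * r n ^ (-2)` for n ≥ 1 (stated in product form). -/
theorem erw_rate_upper_sq
    {G : Type*} [Group G] [DecidableEq G] {Ω : Type*} [MeasurableSpace Ω]
    {P : Measure Ω} [IsProbabilityMeasure P]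
    (d : ℕ) (hd : 3 ≤ d) (p : ℝ) (hp0 : 0 ≤ p) (hp1 : p < 1)
    (E : ERW G d p Ω P) :
    (p ≤ ((d : ℝ) + 1) / (2 * d) →
      ∃ C : ℝ, 0 < C ∧ ∀ n : ℕ, 2 ≤ n →
        rate p d n ^ 2 *
          ∫ ω, |(E.dist n ω : ℝ) / n - ((d : ℝ) - 2) / d| ^ 2 ∂P
            ≤ C * Real.log n) ∧
    (((d : ℝ) + 1) / (2 * d) < p →
      ∃ C : ℝ, 0 < C ∧ ∀ n : ℕ, 1 ≤ n →
        rate p d n ^ 2 *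
          ∫ ω, |(E.dist n ω : ℝ) / n - ((d : ℝ) - 2) / d| ^ 2 ∂P ≤ C) := by
  refine ⟨fun hp => ?_, E.exists_sq_rate_mul_meanSqSpeedError_le_of_gt hd hp1.le⟩
  rcases hp.lt_or_eq with hsub | hcrit
  · exact E.exists_sq_rate_mul_meanSqSpeedError_le_of_lt hd hp0 hsub
  · exact E.exists_sq_rate_mul_meanSqSpeedError_le_of_eq hd hcrit

end
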